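/- arXiv:1605.06872 — 2 statements merged into one kernel-verified Lean document; each statement's English description precedes it below -/
import Mathlib

section
/- Let α ∈ (0,1) and let μ be a probability measure on ℝ whose characteristic function satisfies ∫_ℝ exp(izx) dμ(x) = exp(−Ψ(z)) for all z ∈ ℝ. Then ∫_ℝ |x|^{−α} dμ(x) = (sin(παρ) + sin(παρ̂)) / (Γ(1+α) sin(πα)), where Γ is the real Gamma function. -/
/-!
Formally, `∫₀^∞ t^(α-1) cos(tx) dt = Γ(α) cos(πα/2) |x|^(-α)`, so integrating in `μ` gives
`Γ(α) cos(πα/2) ∫ |x|^(-α) dμ = Re ∫₀^∞ t^(α-1) e^(-c t^α) dt = Re (1 / (α c)) = cos θ / α`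
with `c = e^(iθ)`, `θ = πα(1/2 - ρ)`. The stated value follows from
`sin(παρ) + sin(πα(1-ρ)) = 2 sin(πα/2) cos θ` and `sin(πα) = 2 sin(πα/2) cos(πα/2)`.

The `t`-integral of the cosine is only conditionally convergent, so the factor `e^(-εt)` is inserted.
The kernel then becomes `Re (ε - ix)^(-α)` (`integral_rpow_mul_cexp_neg_mul_Ioi`), and Fubini is
legitimate (`integral_cpow_inv_sub_eq`). As `ε ↓ 0` the `t`-side converges by domination
(`tendsto_integral_damped`). On the `x`-side the kernels lie between `0` and `|x|^(-α)` and converge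
to `cos(πα/2) |x|^(-α)` (`cpow_one_div_re_mem`, `tendsto_ofReal_cpow_re`): Fatou's lemma first shows
that `∫ |x|^(-α) dμ` is finite, and dominated convergence then identifies it.
-/

open MeasureTheory Filter Real
open scoped ENNReal

/-- The characteristic exponent of a stable process with parameters `(α, ρ)`:
`Ψ(z) = |z|^α exp(iπα(1/2 − ρ))` for `z ≥ 0` and
`Ψ(z) = |z|^α exp(−iπα(1/2 − ρ̂))` for `z < 0`, where `ρ̂ = 1 − ρ`. -/
noncomputable def stableExponent (α ρ : ℝ) (z : ℝ) : ℂ :=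
  if 0 ≤ z then
    ((|z| ^ α : ℝ) : ℂ) * Complex.exp (Complex.I * Real.pi * α * (1 / 2 - ρ))
  else
    ((|z| ^ α : ℝ) : ℂ) * Complex.exp (-(Complex.I * Real.pi * α * (1 / 2 - (1 - ρ))))

theorem integrableOn_rpow_mul_exp_neg {a b : ℝ} (ha : 0 < a) (hb : 0 < b) :
    IntegrableOn (fun t : ℝ => t ^ (a - 1) * Real.exp (-(b * t))) (Set.Ioi 0) := by
  simpa using integrableOn_rpow_mul_exp_neg_mul_rpow (p := 1) (s := a - 1) (b := b)
    (by linarith) one_pos hb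

/-- The Gamma integral `∫₀^∞ t^(a-1) e^(-rt) dt = r^(-a) Γ(a)` for complex `r` with `Re r > 0`.
Both sides are holomorphic in `r` on the right half-plane and agree on the positive reals, so the
identity theorem applies. -/
theorem integral_rpow_mul_cexp_neg_mul_Ioi {a : ℝ} (ha : 0 < a) {r : ℂ} (hr : 0 < r.re) :
    ∫ t in Set.Ioi (0 : ℝ), ((t ^ (a - 1) : ℝ) : ℂ) * Complex.exp (-(r * t))
      = (1 / r) ^ (a : ℂ) * (Real.Gamma a : ℂ) := by
  set U : Set ℂ := {z | 0 < z.re} with hU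
  have hUo : IsOpen U := isOpen_lt continuous_const Complex.continuous_re
  have hmeas : ∀ z : ℂ, AEStronglyMeasurable
      (fun t : ℝ => ((t ^ (a - 1) : ℝ) : ℂ) * Complex.exp (-(z * t)))
      (volume.restrict (Set.Ioi 0)) := fun z =>
    (Measurable.aestronglyMeasurable (by fun_prop))
  have hnorm : ∀ (z : ℂ) (t : ℝ), ‖Complex.exp (-(z * t))‖ = Real.exp (-(z.re * t)) := by
    intro z t
    simp [Complex.norm_exp]
  -- the integral is holomorphic on the right half-plane
  have hF : AnalyticOnNhd ℂ
      (fun z : ℂ => ∫ t in Set.Ioi (0 : ℝ), ((t ^ (a - 1) : ℝ) : ℂ) * Complex.exp (-(z * t))) U := by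
    refine DifferentiableOn.analyticOnNhd ?_ hUo
    intro z hz
    have hz : 0 < z.re := hz
    refine DifferentiableAt.differentiableWithinAt ?_
    -- on `{w | Re z / 2 < Re w}` the `w`-derivative is dominated by `t^a e^(-(Re z / 2) t)`
    have hs : {w : ℂ | z.re / 2 < w.re} ∈ nhds z :=
      (isOpen_lt continuous_const Complex.continuous_re).mem_nhds (by
        change z.re / 2 < z.re; linarith)
    refine (hasDerivAt_integral_of_dominated_loc_of_deriv_le
      (μ := volume.restrict (Set.Ioi (0 : ℝ)))
      (F := fun (z : ℂ) (t : ℝ) => ((t ^ (a - 1) : ℝ) : ℂ) * Complex.exp (-(z * t)))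
      (F' := fun (z : ℂ) (t : ℝ) =>
        ((t ^ (a - 1) : ℝ) : ℂ) * (Complex.exp (-(z * t)) * (-(t : ℂ))))
      (bound := fun t : ℝ => t ^ (a + 1 - 1) * Real.exp (-(z.re / 2 * t)))
      hs (Filter.Eventually.of_forall hmeas) ?_ ?_ ?_ ?_ ?_).2.differentiableAt
    · refine (integrableOn_rpow_mul_exp_neg ha hz).mono' (hmeas z) ?_
      filter_upwards [ae_restrict_mem measurableSet_Ioi] with t ht
      rw [norm_mul, hnorm, Complex.norm_real, Real.norm_of_nonneg (Real.rpow_nonneg (le_of_lt ht) _)]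
    · exact Measurable.aestronglyMeasurable (by fun_prop)
    · filter_upwards [ae_restrict_mem measurableSet_Ioi] with t ht w hw
      have ht : 0 < t := ht
      have hw : z.re / 2 < w.re := hw
      rw [norm_mul, norm_mul, hnorm, Complex.norm_real, norm_neg, Complex.norm_real,
        Real.norm_of_nonneg (Real.rpow_nonneg ht.le _), Real.norm_of_nonneg ht.le,
        show a + 1 - 1 = (a - 1) + 1 by ring, Real.rpow_add_one ht.ne',
        mul_comm (Real.exp _), ← mul_assoc]
      gcongr
    · exact integrableOn_rpow_mul_exp_neg (by linarith) (by linarith)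
    · filter_upwards with t w hw
      have h1 : HasDerivAt (fun w : ℂ => -(w * t)) (-(t : ℂ)) w := by
        have h2 := ((hasDerivAt_id w).mul_const (t : ℂ)).neg
        rw [one_mul] at h2
        exact h2
      exact h1.cexp.const_mul _
  have hG : AnalyticOnNhd ℂ (fun z : ℂ => (1 / z) ^ (a : ℂ) * (Real.Gamma a : ℂ)) U := by
    refine DifferentiableOn.analyticOnNhd ?_ hUo
    intro z hz
    have hz : 0 < z.re := hz
    have hz0 : z ≠ 0 := by rintro rfl; simp at hz
    refine DifferentiableAt.differentiableWithinAt ?_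
    refine DifferentiableAt.mul_const ?_ _
    refine DifferentiableAt.cpow_const ?_ (Or.inl ?_)
    · exact (differentiableAt_const _).div differentiableAt_id hz0
    · rw [one_div, Complex.inv_re]
      exact div_pos hz (Complex.normSq_pos.2 hz0)
  have hreal : ∀ b : ℝ, 0 < b →
      ∫ t in Set.Ioi (0 : ℝ), ((t ^ (a - 1) : ℝ) : ℂ) * Complex.exp (-((b : ℂ) * t))
        = (1 / (b : ℂ)) ^ (a : ℂ) * (Real.Gamma a : ℂ) := by
    intro b hb
    have h := congrArg (fun x : ℝ => (x : ℂ)) (Real.integral_rpow_mul_exp_neg_mul_Ioi ha hb)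
    simp only [← integral_complex_ofReal] at h
    push_cast [Complex.ofReal_cpow (one_div_pos.2 hb).le] at h
    exact h
  have hfreq : ∃ᶠ z in nhdsWithin (1 : ℂ) {1}ᶜ,
      ∫ t in Set.Ioi (0 : ℝ), ((t ^ (a - 1) : ℝ) : ℂ) * Complex.exp (-(z * t))
        = (1 / z) ^ (a : ℂ) * (Real.Gamma a : ℂ) := by
    have ht : Tendsto (fun b : ℝ => (b : ℂ)) (nhdsWithin 1 {1}ᶜ) (nhdsWithin 1 {1}ᶜ) := by
      refine tendsto_nhdsWithin_iff.2 ⟨?_, ?_⟩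
      · exact (Complex.continuous_ofReal.tendsto' 1 1 (by simp)).mono_left nhdsWithin_le_nhds
      · filter_upwards [self_mem_nhdsWithin] with b hb
        simpa using hb
    refine ht.frequently (Filter.Eventually.frequently ?_)
    filter_upwards [nhdsWithin_le_nhds (Ioi_mem_nhds (one_pos : (0 : ℝ) < 1))] with b hb
    exact hreal b hb
  exact hF.eqOn_of_preconnected_of_frequently_eq hG
    (convex_halfSpace_re_gt 0).isPreconnected (by simp [hU]) hfreq hr

/-- The limiting value `∫₀^∞ t^(a-1) e^(-c t^a) dt = 1 / (a c)`, by the substitution `y = t^a`. -/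
theorem integral_rpow_mul_cexp_neg_rpow_Ioi {a : ℝ} (ha : 0 < a) {c : ℂ} (hc : 0 < c.re) :
    ∫ t in Set.Ioi (0 : ℝ), ((t ^ (a - 1) : ℝ) : ℂ) * Complex.exp (-(((t ^ a : ℝ) : ℂ) * c))
      = 1 / (a * c) := by
  have h := integral_comp_rpow_Ioi (fun y : ℝ => Complex.exp (-c * y)) ha.ne'
  rw [integral_exp_mul_complex_Ioi (by simpa using hc), neg_div_neg_eq] at h
  have hc0 : c ≠ 0 := by rintro rfl; simp at hc
  have ha0 : (a : ℂ) ≠ 0 := by exact_mod_cast ha.ne'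
  simp only [abs_of_pos ha, Complex.real_smul, Complex.ofReal_mul, mul_assoc] at h
  rw [integral_const_mul] at h
  have h2 : (a : ℂ) * (∫ t in Set.Ioi (0 : ℝ), ((t ^ (a - 1) : ℝ) : ℂ) *
      Complex.exp (-(((t ^ a : ℝ) : ℂ) * c))) = 1 / c := by
    convert h using 2
    · refine integral_congr_ae (Filter.Eventually.of_forall fun t => ?_)
      simp only [neg_mul, mul_comm c]
    · simp
  rw [one_div, mul_inv, ← one_div c, ← h2, inv_mul_cancel_left₀ ha0]

/-- The regularised moment `∫ (ε - ix)^(-α) dμ` in terms of the characteristic function of `μ`: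
write `(ε - ix)^(-α) Γ(α)` as a Gamma integral and apply Fubini. Only the values of the
characteristic function on the positive half-line enter. -/
theorem integral_cpow_inv_sub_eq {α ρ : ℝ} (hα : 0 < α)
    (μ : Measure ℝ) [IsProbabilityMeasure μ]
    (hchar : ∀ z : ℝ,
      ∫ x, Complex.exp (Complex.I * z * x) ∂μ = Complex.exp (-(stableExponent α ρ z)))
    {ε : ℝ} (hε : 0 < ε) :
    Integrable (fun x : ℝ => (1 / ((ε : ℂ) - Complex.I * x)) ^ (α : ℂ)) μ ∧
    (∫ x : ℝ, (1 / ((ε : ℂ) - Complex.I * x)) ^ (α : ℂ) ∂μ) * (Real.Gamma α : ℂ)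
      = ∫ t in Set.Ioi (0 : ℝ), ((t ^ (α - 1) : ℝ) : ℂ) * Complex.exp (-(ε * t)) *
          Complex.exp (-(((t ^ α : ℝ) : ℂ) *
            Complex.exp (Complex.I * Real.pi * α * (1 / 2 - ρ)))) := by
  have hprod : Integrable (Function.uncurry fun (x t : ℝ) =>
      ((t ^ (α - 1) : ℝ) : ℂ) * Complex.exp (-(((ε : ℂ) - Complex.I * x) * t)))
      (μ.prod (volume.restrict (Set.Ioi 0))) := by
    have h1 : Integrable (fun z : ℝ × ℝ => (1 : ℝ) * (z.2 ^ (α - 1) * Real.exp (-(ε * z.2))))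
        (μ.prod (volume.restrict (Set.Ioi 0))) :=
      Integrable.mul_prod (integrable_const (1 : ℝ)) (integrableOn_rpow_mul_exp_neg hα hε)
    refine h1.mono (Measurable.aestronglyMeasurable (by unfold Function.uncurry; fun_prop)) ?_
    refine Filter.Eventually.of_forall fun z => ?_
    simp [Function.uncurry, Complex.norm_exp]
  have hint := hprod.integral_prod_left
  have hswap := integral_integral_swap hprod
  have hre : ∀ x : ℝ, 0 < ((ε : ℂ) - Complex.I * x).re := fun x => by simpa using hε
  simp only [Function.uncurry, integral_rpow_mul_cexp_neg_mul_Ioi hα (hre _)] at hint hswap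
  have hΓ : (Real.Gamma α : ℂ) ≠ 0 := by exact_mod_cast (Real.Gamma_pos_of_pos hα).ne'
  refine ⟨by simpa [mul_assoc, hΓ] using hint.mul_const ((Real.Gamma α : ℂ)⁻¹), ?_⟩
  rw [← integral_mul_const, hswap]
  refine setIntegral_congr_fun measurableSet_Ioi fun t ht => ?_
  have ht : 0 < t := ht
  have h := hchar t
  rw [stableExponent, if_pos ht.le, abs_of_pos ht] at h
  change (∫ x, _ ∂μ) = _
  rw [← h, ← integral_const_mul]
  refine integral_congr_ae (Filter.Eventually.of_forall fun x => ?_)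
  change ((t ^ (α - 1) : ℝ) : ℂ) * Complex.exp (-(((ε : ℂ) - Complex.I * x) * t))
    = ((t ^ (α - 1) : ℝ) : ℂ) * Complex.exp (-(ε * t)) * Complex.exp (Complex.I * t * x)
  rw [mul_assoc, ← Complex.exp_add]
  congr 2
  ring

theorem norm_one_div_sub_I_mul_rpow_le {ε α : ℝ} (hα : 0 < α) {x : ℝ} (hx : x ≠ 0) :
    ‖1 / ((ε : ℂ) - Complex.I * x)‖ ^ α ≤ |x| ^ (-α) := by
  rw [norm_div, norm_one, one_div, Real.inv_rpow (norm_nonneg _), ← Real.rpow_neg (norm_nonneg _)]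
  refine Real.rpow_le_rpow_of_nonpos (abs_pos.2 hx) ?_ (by linarith)
  simpa using Complex.abs_im_le_norm ((ε : ℂ) - Complex.I * x)

/-- `0 ≤ Re (ε - ix)^(-α) ≤ |x|^(-α)`. Positivity holds since `1 / (ε - ix)` has argument at most
`π / 2` in absolute value and `α < 1`. -/
theorem cpow_one_div_re_mem {ε α : ℝ} (hε : 0 < ε) (hα : α ∈ Set.Ioo (0 : ℝ) 1) (x : ℝ) :
    0 ≤ ((1 / ((ε : ℂ) - Complex.I * x)) ^ (α : ℂ)).re ∧
      (x ≠ 0 → ((1 / ((ε : ℂ) - Complex.I * x)) ^ (α : ℂ)).re ≤ |x| ^ (-α)) := by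
  constructor
  · rw [Complex.cpow_ofReal_re]
    have hre : 0 ≤ (1 / ((ε : ℂ) - Complex.I * x)).re := by
      rw [one_div, Complex.inv_re]
      exact div_nonneg (by simpa using hε.le) (Complex.normSq_nonneg _)
    have harg := abs_le.1 (Complex.abs_arg_le_pi_div_two_iff.2 hre)
    refine mul_nonneg (Real.rpow_nonneg (norm_nonneg _) _) (Real.cos_nonneg_of_mem_Icc ⟨?_, ?_⟩)
    · nlinarith [hα.1, hα.2, Real.pi_pos]
    · nlinarith [hα.1, hα.2, Real.pi_pos]
  · intro hx
    refine (Complex.re_le_norm _).trans ?_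
    rw [Complex.norm_cpow_real]
    exact norm_one_div_sub_I_mul_rpow_le hα.1 hx

/-- As `ε ↓ 0`, `Re (ε - ix)^(-α)` tends to `cos(πα/2) |x|^(-α)`, the value at `x = 0` being `∞`
on both sides. -/
theorem tendsto_ofReal_cpow_re {α : ℝ} (hα : α ∈ Set.Ioo (0 : ℝ) 1) {ε : ℕ → ℝ}
    (hε : ∀ n, 0 < ε n) (hε0 : Tendsto ε atTop (nhds 0)) (x : ℝ) :
    Tendsto (fun n => ENNReal.ofReal ((1 / ((ε n : ℂ) - Complex.I * x)) ^ (α : ℂ)).re) atTop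
      (nhds (ENNReal.ofReal (Real.cos (π / 2 * α)) * (ENNReal.ofReal |x|) ^ (-α))) := by
  have hcos : 0 < Real.cos (π / 2 * α) :=
    Real.cos_pos_of_mem_Ioo ⟨by nlinarith [hα.1, hα.2, Real.pi_pos],
      by nlinarith [hα.1, hα.2, Real.pi_pos]⟩
  rcases eq_or_ne x 0 with rfl | hx
  · have h1 : ENNReal.ofReal (Real.cos (π / 2 * α)) * (ENNReal.ofReal |(0 : ℝ)|) ^ (-α) = ⊤ := by
      rw [abs_zero, ENNReal.ofReal_zero, ENNReal.zero_rpow_of_neg (by linarith [hα.1]),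
        ENNReal.mul_top (ENNReal.ofReal_pos.2 hcos).ne']
    rw [h1]
    refine ENNReal.tendsto_ofReal_nhds_top.2 ?_
    have h2 : ∀ n, ((1 / ((ε n : ℂ) - Complex.I * (0 : ℝ))) ^ (α : ℂ)).re = (ε n)⁻¹ ^ α := by
      intro n
      have : (1 / ((ε n : ℂ) - Complex.I * (0 : ℝ))) = (((ε n)⁻¹ : ℝ) : ℂ) := by simp
      rw [this, ← Complex.ofReal_cpow (inv_pos.2 (hε n)).le, Complex.ofReal_re]
    simp only [h2]
    refine (tendsto_rpow_atTop hα.1).comp ?_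
    exact tendsto_inv_nhdsGT_zero.comp (tendsto_nhdsWithin_iff.2
      ⟨hε0, Filter.Eventually.of_forall hε⟩)
  · have h1 : ENNReal.ofReal (Real.cos (π / 2 * α)) * (ENNReal.ofReal |x|) ^ (-α)
        = ENNReal.ofReal ((1 / (((0 : ℝ) : ℂ) - Complex.I * x)) ^ (α : ℂ)).re := by
      have h3 : (1 / (((0 : ℝ) : ℂ) - Complex.I * x)) = ((x⁻¹ : ℝ) : ℂ) * Complex.I := by
        have : (x : ℂ) ≠ 0 := by exact_mod_cast hx
        rw [Complex.ofReal_zero, zero_sub, Complex.ofReal_inv]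
        field_simp
        simp
      rw [Complex.cpow_ofReal_re, h3, ENNReal.ofReal_rpow_of_pos (abs_pos.2 hx),
        ← ENNReal.ofReal_mul hcos.le, mul_comm]
      congr 1
      congr 1
      · rw [norm_mul, Complex.norm_I, mul_one, Complex.norm_real, Real.norm_eq_abs, abs_inv,
          Real.inv_rpow (abs_nonneg _), Real.rpow_neg (abs_nonneg _)]
      · rcases lt_or_gt_of_ne hx with h | h
        · have : ((x⁻¹ : ℝ) : ℂ) * Complex.I = ((-x⁻¹ : ℝ) : ℂ) * (-Complex.I) := by simp
          rw [this, Complex.arg_real_mul _ (by simpa using h), Complex.arg_neg_I, neg_mul,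
            Real.cos_neg]
        · rw [Complex.arg_real_mul _ (inv_pos.2 h), Complex.arg_I]
    rw [h1]
    refine ENNReal.tendsto_ofReal ((Complex.continuous_re.tendsto _).comp ?_)
    have hne : ((0 : ℝ) : ℂ) - Complex.I * x ≠ 0 := by simpa using hx
    have hcont : ContinuousAt (fun e : ℝ => (1 / ((e : ℂ) - Complex.I * x)) ^ (α : ℂ)) 0 := by
      refine ContinuousAt.cpow ?_ continuousAt_const (Or.inr ?_)
      · exact continuousAt_const.div (by fun_prop) hne
      · rw [one_div, Complex.inv_im]
        exact div_ne_zero (by simpa using hx) (Complex.normSq_pos.2 hne).ne'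
    exact hcont.tendsto.comp hε0

/-- The damping factor `e^(-εt)` may be removed from the Gamma-type integral, since `t^(α-1) e^(-c t^α)`
is absolutely integrable. -/
theorem tendsto_integral_damped {α : ℝ} (hα : 0 < α) {c : ℂ} (hc : 0 < c.re) {ε : ℕ → ℝ}
    (hε : ∀ n, 0 < ε n) (hε0 : Tendsto ε atTop (nhds 0)) :
    Tendsto (fun n => ∫ t in Set.Ioi (0 : ℝ), ((t ^ (α - 1) : ℝ) : ℂ) *
        Complex.exp (-(ε n * t)) * Complex.exp (-(((t ^ α : ℝ) : ℂ) * c))) atTop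
      (nhds (1 / (α * c))) := by
  rw [← integral_rpow_mul_cexp_neg_rpow_Ioi hα hc]
  refine tendsto_integral_of_dominated_convergence
    (fun t : ℝ => t ^ (α - 1) * Real.exp (-c.re * t ^ α)) ?_
    (integrableOn_rpow_mul_exp_neg_mul_rpow (by linarith) hα hc) ?_ ?_
  · exact fun n => Measurable.aestronglyMeasurable (by fun_prop)
  · intro n
    filter_upwards [ae_restrict_mem measurableSet_Ioi] with t ht
    have ht : 0 < t := ht
    have h1 : ‖Complex.exp (-((ε n : ℂ) * t))‖ ≤ 1 := by
      rw [Complex.norm_exp, Real.exp_le_one_iff]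
      simpa using (mul_pos (hε n) ht).le
    have h2 : ‖Complex.exp (-(((t ^ α : ℝ) : ℂ) * c))‖ = Real.exp (-c.re * t ^ α) := by
      rw [Complex.norm_exp, Complex.neg_re, Complex.re_ofReal_mul, neg_mul, mul_comm]
    rw [norm_mul, norm_mul, h2, Complex.norm_real, Real.norm_of_nonneg (Real.rpow_nonneg ht.le _)]
    refine mul_le_mul_of_nonneg_right ?_ (Real.exp_pos _).le
    exact mul_le_of_le_one_right (Real.rpow_nonneg ht.le _) h1
  · filter_upwards with t
    have h : Tendsto (fun n => Complex.exp (-((ε n : ℂ) * t))) atTop (nhds 1) := by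
      have : Continuous fun e : ℝ => Complex.exp (-((e : ℂ) * t)) := by fun_prop
      exact (this.tendsto' 0 1 (by simp)).comp hε0
    simpa using (h.const_mul (((t ^ (α - 1) : ℝ) : ℂ))).mul_const
      (Complex.exp (-(((t ^ α : ℝ) : ℂ) * c)))

/-- If `μ` is a probability measure on `ℝ` with characteristic
function `exp(−Ψ(z))`, where `Ψ` is the stable characteristic exponent with
parameters `(α, ρ)`, `α ∈ (0,1)`, then
`∫ |x|^{−α} dμ(x) = (sin(παρ) + sin(παρ̂)) / (Γ(1+α) sin(πα))`. -/
theorem stable_negative_moment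
    (α ρ : ℝ) (hα : α ∈ Set.Ioo (0 : ℝ) 1) (hρ : ρ ∈ Set.Ioo (0 : ℝ) 1)
    (hαρ : α * ρ ∈ Set.Ioo (0 : ℝ) 1) (hαρ' : α * (1 - ρ) ∈ Set.Ioo (0 : ℝ) 1)
    (μ : Measure ℝ) [IsProbabilityMeasure μ]
    (hchar : ∀ z : ℝ,
      ∫ x, Complex.exp (Complex.I * z * x) ∂μ = Complex.exp (-(stableExponent α ρ z))) :
    ∫⁻ x, (ENNReal.ofReal |x|) ^ (-α) ∂μ
      = ENNReal.ofReal
          ((Real.sin (π * α * ρ) + Real.sin (π * α * (1 - ρ)))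
            / (Real.Gamma (1 + α) * Real.sin (π * α))) := by
  obtain ⟨hα0, hα1⟩ := hα
  have hΓ : 0 < Real.Gamma α := Real.Gamma_pos_of_pos hα0
  have hcos : 0 < Real.cos (π / 2 * α) :=
    Real.cos_pos_of_mem_Ioo ⟨by nlinarith [Real.pi_pos], by nlinarith [Real.pi_pos]⟩
  have hsin : 0 < Real.sin (π / 2 * α) :=
    Real.sin_pos_of_pos_of_lt_pi (by positivity) (by nlinarith [Real.pi_pos])
  set θ : ℝ := π * α * (1 / 2 - ρ) with hθ
  have hcosθ : 0 < Real.cos θ := by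
    have h1 : π * (α * ρ) < π := by nlinarith [Real.pi_pos, hαρ.2]
    have h2 : 0 < π * (α * ρ) := mul_pos Real.pi_pos hαρ.1
    have h3 : 0 < π * (α * (1 - ρ)) := mul_pos Real.pi_pos hαρ'.1
    have h4 : π * α < π := by nlinarith [Real.pi_pos]
    refine Real.cos_pos_of_mem_Ioo ⟨?_, ?_⟩ <;> rw [hθ] <;> nlinarith
  set c : ℂ := Complex.exp (Complex.I * Real.pi * α * (1 / 2 - ρ)) with hc
  have hcθ : c = Complex.exp (θ * Complex.I) := by
    rw [hc, hθ]; congr 1; push_cast; ring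
  have hcre : c.re = Real.cos θ := by rw [hcθ, Complex.exp_ofReal_mul_I_re]
  set ε : ℕ → ℝ := fun n => 1 / ((n : ℝ) + 1) with hεdef
  have hε : ∀ n, 0 < ε n := fun n => by positivity
  have hε0 : Tendsto ε atTop (nhds 0) := tendsto_one_div_add_atTop_nhds_zero_nat
  set f : ℕ → ℝ → ℝ := fun n x => ((1 / ((ε n : ℂ) - Complex.I * x)) ^ (α : ℂ)).re with hf
  have hfmeas : ∀ n, Measurable fun x => ENNReal.ofReal (f n x) := fun n => by
    simp only [hf]; fun_prop
  -- the regularised moments converge to `L`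
  set L : ℝ := Real.cos θ / (α * Real.Gamma α) with hL
  have hlim : Tendsto (fun n => ∫⁻ x, ENNReal.ofReal (f n x) ∂μ) atTop
      (nhds (ENNReal.ofReal L)) := by
    have h1 : ∀ n, ∫⁻ x, ENNReal.ofReal (f n x) ∂μ = ENNReal.ofReal
        ((∫ t in Set.Ioi (0 : ℝ), ((t ^ (α - 1) : ℝ) : ℂ) * Complex.exp (-(ε n * t)) *
          Complex.exp (-(((t ^ α : ℝ) : ℂ) * c))).re / Real.Gamma α) := by
      intro n
      obtain ⟨hi, he⟩ := integral_cpow_inv_sub_eq hα0 μ hchar (hε n)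
      have hi' : Integrable (f n) μ := hi.re
      rw [← ofReal_integral_eq_lintegral_ofReal hi'
        (Filter.Eventually.of_forall fun x => (cpow_one_div_re_mem (hε n) ⟨hα0, hα1⟩ x).1), ← he,
        Complex.re_mul_ofReal, mul_div_cancel_right₀ _ hΓ.ne']
      congr 1
      exact integral_re hi
    simp only [h1]
    refine ENNReal.tendsto_ofReal ?_
    have h2 : L = (1 / ((α : ℂ) * c)).re / Real.Gamma α := by
      have : 1 / ((α : ℂ) * c) = ((α⁻¹ : ℝ) : ℂ) * Complex.exp ((-θ : ℝ) * Complex.I) := by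
        rw [hcθ, one_div, mul_inv, ← Complex.exp_neg]
        push_cast; congr 2; ring
      rw [this, Complex.re_ofReal_mul, Complex.exp_ofReal_mul_I_re, Real.cos_neg, hL]
      field_simp
    rw [h2]
    exact ((Complex.continuous_re.tendsto _).comp
      (tendsto_integral_damped hα0 (hcre ▸ hcosθ) hε hε0)).div_const _
  have hpt : ∀ x : ℝ, Tendsto (fun n => ENNReal.ofReal (f n x)) atTop
      (nhds (ENNReal.ofReal (Real.cos (π / 2 * α)) * (ENNReal.ofReal |x|) ^ (-α))) :=
    tendsto_ofReal_cpow_re ⟨hα0, hα1⟩ hε hε0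
  have hgm : Measurable fun x : ℝ => (ENNReal.ofReal |x|) ^ (-α) := by fun_prop
  -- Fatou's lemma: the moment is finite
  have hfin : ∫⁻ x, (ENNReal.ofReal |x|) ^ (-α) ∂μ ≠ ⊤ := by
    have h := lintegral_liminf_le (μ := μ) (u := atTop) hfmeas
    simp only [(hpt _).liminf_eq, hlim.liminf_eq] at h
    rw [lintegral_const_mul _ hgm] at h
    intro htop
    rw [htop, ENNReal.mul_top (ENNReal.ofReal_pos.2 hcos).ne'] at h
    exact ENNReal.ofReal_ne_top (top_le_iff.1 h)
  -- `|x|^(-α)`, now known to be integrable, dominates the regularised integrands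
  have hdom := tendsto_lintegral_of_dominated_convergence
    (fun x : ℝ => (ENNReal.ofReal |x|) ^ (-α)) hfmeas (fun n => Filter.Eventually.of_forall
      fun x => by
        rcases eq_or_ne x 0 with rfl | hx
        · simp [ENNReal.zero_rpow_of_neg (neg_lt_zero.2 hα0)]
        · change ENNReal.ofReal (f n x) ≤ (ENNReal.ofReal |x|) ^ (-α)
          rw [ENNReal.ofReal_rpow_of_pos (abs_pos.2 hx)]
          exact ENNReal.ofReal_le_ofReal ((cpow_one_div_re_mem (hε n) ⟨hα0, hα1⟩ x).2 hx))
    hfin (Filter.Eventually.of_forall hpt)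
  have key := tendsto_nhds_unique hdom hlim
  rw [lintegral_const_mul _ hgm] at key
  have hval : (Real.sin (π * α * ρ) + Real.sin (π * α * (1 - ρ)))
      / (Real.Gamma (1 + α) * Real.sin (π * α)) = L / Real.cos (π / 2 * α) := by
    have h1 : Real.sin (π * α * ρ) + Real.sin (π * α * (1 - ρ))
        = 2 * Real.sin (π / 2 * α) * Real.cos θ := by
      rw [Real.sin_add_sin, ← Real.cos_neg θ, hθ]
      congr 2 <;> ring_nf
    have h2 : Real.sin (π * α) = 2 * Real.sin (π / 2 * α) * Real.cos (π / 2 * α) := by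
      rw [← Real.sin_two_mul]; ring_nf
    rw [h1, h2, add_comm 1 α, Real.Gamma_add_one hα0.ne', hL, div_div, div_eq_div_iff
      (by positivity) (by positivity)]
    ring
  rw [hval, ENNReal.ofReal_div_of_pos hcos, ← key, mul_comm,
    ENNReal.mul_div_cancel_right (ENNReal.ofReal_pos.2 hcos).ne' ENNReal.ofReal_ne_top]
end

section
/- Let α ∈ (0,2) and define ψ(u) = −2^α · Γ((α − u)/2) · Γ((u + 2)/2) / (Γ(−u/2) · Γ((u + 2 − α)/2)) for real u ∈ (−2, α), where Γ is the real Gamma function. Then: (a) ψ(u) → 0 as u → 0 with u ≠ 0; (b) ψ(u) → 0 as u → α − 2 with u ≠ α − 2; (c) ψ(u) → +∞ as u → α from the left; (d) ψ(u) → +∞ as u → −2 from the right. (ψ is the Laplace exponent of the Lévy process underlying the radial part of the planar stable process; (a) and (b) identify its roots at 0 and α − 2, and (c), (d) its explosion at the endpoints of (−2, α).) -/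
open Real Filter Topology

/-!
The reciprocal `1/Γ` is continuous on the whole real line and vanishes at `0` (`Γ` has a pole
there), while `Γ` itself is continuous on `(0, ∞)`. So `ψ`, written as
`-(2^α Γ((α-u)/2) Γ((u+2)/2)) · (1/Γ)(-u/2) · (1/Γ)((u+2-α)/2)`, is continuous on `(-2, α)`,
with value `0` at `u = 0`. As `u ↑ α`, the factor `Γ((α-u)/2)` tends to `+∞` and the
remaining factors tend to `-2^α Γ((α+2)/2) / Γ(-α/2)`, which is positive because `Γ < 0` on
`(-1, 0)`.

The reflection `u ↦ α - 2 - u` exchanges the two factors in the numerator and the two in the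
denominator, so `ψ` is invariant under it; it carries `0` to `α - 2` and `α` to `-2`, which gives
the other two limits.
-/

/-- Division by zero causes no discontinuity: Mathlib sets `Γ(-n) = 0`, so `(Γ(-n))⁻¹ = 0`, which
is the value of the entire function `1/Γ` at the pole `-n`. -/
lemma continuous_inv_Gamma : Continuous fun x : ℝ => (Real.Gamma x)⁻¹ := by
  have h : Continuous fun x : ℝ => ((Complex.Gamma (x : ℂ))⁻¹).re :=
    Complex.continuous_re.comp
      (Complex.differentiable_one_div_Gamma.continuous.comp Complex.continuous_ofReal)
  refine h.congr fun x => ?_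
  rw [Complex.Gamma_ofReal, ← Complex.ofReal_inv, Complex.ofReal_re]

lemma continuousAt_Gamma_of_pos {x : ℝ} (hx : 0 < x) : ContinuousAt Real.Gamma x :=
  (Real.differentiableAt_Gamma fun m => by
    have : (0 : ℝ) ≤ m := m.cast_nonneg
    linarith).continuousAt

lemma tendsto_Gamma_nhdsGT_zero : Tendsto Real.Gamma (𝓝[>] 0) atTop := by
  have h : Tendsto (fun x : ℝ => (Real.Gamma x)⁻¹) (𝓝[>] 0) (𝓝[>] 0) := by
    refine tendsto_nhdsWithin_iff.2 ⟨?_, ?_⟩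
    · have := continuous_inv_Gamma.tendsto 0
      rw [Real.Gamma_zero, inv_zero] at this
      exact this.mono_left nhdsWithin_le_nhds
    · filter_upwards [self_mem_nhdsWithin] with x hx
      exact inv_pos.2 (Real.Gamma_pos_of_pos hx)
  exact h.inv_tendsto_nhdsGT_zero.congr fun x => inv_inv (Real.Gamma x)

lemma Gamma_neg_of_mem_Ioo {x : ℝ} (hx : x ∈ Set.Ioo (-1 : ℝ) 0) : Real.Gamma x < 0 := by
  have h := Real.Gamma_add_one hx.2.ne
  have hp : 0 < Real.Gamma (x + 1) := Real.Gamma_pos_of_pos (by linarith [hx.1])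
  rw [h] at hp
  exact (neg_iff_neg_of_mul_pos hp).1 hx.2

/-- Let `α ∈ (0,2)` and
`ψ(u) = −2^α Γ((α − u)/2) Γ((u + 2)/2) / (Γ(−u/2) Γ((u + 2 − α)/2))` for real `u`.
Then (a) `ψ(u) → 0` as `u → 0`, `u ≠ 0`; (b) `ψ(u) → 0` as `u → α − 2`, `u ≠ α − 2`;
(c) `ψ(u) → +∞` as `u ↑ α`; (d) `ψ(u) → +∞` as `u ↓ −2`.
(The Laplace exponent of the Lévy process underlying the radial part of the planar
stable process: roots at `0` and `α − 2`, explosion at the endpoints of `(−2, α)`.) -/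
theorem radial_laplace_exponent_roots_and_explosion
    (α : ℝ) (hα : α ∈ Set.Ioo (0 : ℝ) 2)
    (ψ : ℝ → ℝ)
    (hψ : ∀ u : ℝ,
      ψ u = -((2 : ℝ) ^ α * Real.Gamma ((α - u) / 2) * Real.Gamma ((u + 2) / 2)
        / (Real.Gamma (-u / 2) * Real.Gamma ((u + 2 - α) / 2)))) :
    Tendsto ψ (𝓝[≠] (0 : ℝ)) (𝓝 0) ∧
    Tendsto ψ (𝓝[≠] (α - 2)) (𝓝 0) ∧
    Tendsto ψ (𝓝[<] α) atTop ∧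
    Tendsto ψ (𝓝[>] (-2 : ℝ)) atTop := by
  obtain ⟨h0, h2⟩ := hα
  have hψ' : ∀ u, ψ u = Real.Gamma ((α - u) / 2) *
      (-((2 : ℝ) ^ α * Real.Gamma ((u + 2) / 2)
        * (Real.Gamma (-u / 2))⁻¹ * (Real.Gamma ((u + 2 - α) / 2))⁻¹)) := fun u => by
    rw [hψ, div_eq_mul_inv, mul_inv]
    ring
  have hsymm : ∀ u, ψ (α - 2 - u) = ψ u := fun u => by
    rw [hψ, hψ, show (α - (α - 2 - u)) / 2 = (u + 2) / 2 by ring,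
      show (α - 2 - u + 2) / 2 = (α - u) / 2 by ring,
      show -(α - 2 - u) / 2 = (u + 2 - α) / 2 by ring,
      show (α - 2 - u + 2 - α) / 2 = -u / 2 by ring]
    ring
  -- All factors but `Γ((α - u)/2)` stay continuous up to the endpoint `α`.
  have hcont : ∀ u, -2 < u → ContinuousAt (fun u : ℝ =>
      -((2 : ℝ) ^ α * Real.Gamma ((u + 2) / 2)
        * (Real.Gamma (-u / 2))⁻¹ * (Real.Gamma ((u + 2 - α) / 2))⁻¹)) u := fun u hu => by
    have hb : ContinuousAt (fun u : ℝ => Real.Gamma ((u + 2) / 2)) u :=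
      ContinuousAt.comp (f := fun u : ℝ => (u + 2) / 2)
        (continuousAt_Gamma_of_pos (by linarith)) (by fun_prop)
    have hc : Continuous fun u : ℝ => (Real.Gamma (-u / 2))⁻¹ :=
      continuous_inv_Gamma.comp (by fun_prop : Continuous fun u : ℝ => -u / 2)
    have hd : Continuous fun u : ℝ => (Real.Gamma ((u + 2 - α) / 2))⁻¹ :=
      continuous_inv_Gamma.comp (by fun_prop : Continuous fun u : ℝ => (u + 2 - α) / 2)
    exact (((continuousAt_const.mul hb).mul hc.continuousAt).mul hd.continuousAt).neg
  have hA : Tendsto ψ (𝓝[≠] (0 : ℝ)) (𝓝 0) := by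
    have ha : ContinuousAt (fun u : ℝ => Real.Gamma ((α - u) / 2)) 0 :=
      ContinuousAt.comp (f := fun u : ℝ => (α - u) / 2)
        (continuousAt_Gamma_of_pos (by linarith)) (by fun_prop)
    have hc : ContinuousAt ψ 0 := by
      rw [funext hψ']
      exact ha.mul (hcont 0 (by norm_num))
    have hz : ψ 0 = 0 := by simp [hψ']
    simpa only [hz] using hc.tendsto.mono_left (nhdsWithin_le_nhds (s := {0}ᶜ))
  have hC : Tendsto ψ (𝓝[<] α) atTop := by
    rw [funext hψ']
    have hlim : Tendsto (fun u : ℝ => (α - u) / 2) (𝓝[<] α) (𝓝[>] 0) := by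
      refine tendsto_nhdsWithin_iff.2 ⟨?_, ?_⟩
      · have h : Continuous fun u : ℝ => (α - u) / 2 := by fun_prop
        simpa using (h.tendsto α).mono_left nhdsWithin_le_nhds
      · filter_upwards [self_mem_nhdsWithin] with u hu
        have : u < α := hu
        exact div_pos (sub_pos.2 this) two_pos
    refine (tendsto_Gamma_nhdsGT_zero.comp hlim).atTop_mul_pos ?_
      ((hcont α (by linarith)).tendsto.mono_left nhdsWithin_le_nhds)
    have hneg : (Real.Gamma (-α / 2))⁻¹ < 0 :=
      inv_lt_zero.2 (Gamma_neg_of_mem_Ioo ⟨by linarith, by linarith⟩)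
    have hb : 0 < Real.Gamma ((α + 2) / 2) := Real.Gamma_pos_of_pos (by linarith)
    have hd : 0 < (Real.Gamma ((α + 2 - α) / 2))⁻¹ :=
      inv_pos.2 (Real.Gamma_pos_of_pos (by linarith))
    have h2α : (0 : ℝ) < 2 ^ α := Real.rpow_pos_of_pos two_pos α
    exact neg_pos.2 (mul_neg_of_neg_of_pos (mul_neg_of_pos_of_neg (mul_pos h2α hb) hneg) hd)
  have hrefl : Continuous fun u : ℝ => α - 2 - u := by fun_prop
  refine ⟨hA, ?_, hC, ?_⟩
  · have hlim : Tendsto (fun u : ℝ => α - 2 - u) (𝓝[≠] (α - 2)) (𝓝[≠] 0) := by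
      refine tendsto_nhdsWithin_iff.2 ⟨?_, ?_⟩
      · simpa using (hrefl.tendsto (α - 2)).mono_left nhdsWithin_le_nhds
      · filter_upwards [self_mem_nhdsWithin] with u hu
        exact sub_ne_zero.2 (Ne.symm hu)
    exact (hA.comp hlim).congr hsymm
  · have hlim : Tendsto (fun u : ℝ => α - 2 - u) (𝓝[>] (-2)) (𝓝[<] α) := by
      refine tendsto_nhdsWithin_iff.2 ⟨?_, ?_⟩
      · simpa using (hrefl.tendsto (-2)).mono_left nhdsWithin_le_nhds
      · filter_upwards [self_mem_nhdsWithin] with u hu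
        have h : -2 < u := hu
        change α - 2 - u < α
        linarith
    exact (hC.comp hlim).congr hsymm
end
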